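/- SDP formulation of eigenvalue optimization over a free spectrahedron: let f = f* ∈ M_d(ℂ⟨x⟩), let L be a monic hermitian linear matrix pencil of size e, and set δ = ⌊(deg f)/2⌋. Then for every μ ∈ ℝ the following two conditions are equivalent, hence the sets they define have the same infimum: (i) f(X) ⪯ μ·I for every k ∈ ℕ and every X ∈ D_L(k) (i.e., the largest eigenvalue of f(X) is at most μ on all of D_L); (ii) there exist finitely many sᵢ ∈ M_d(ℂ⟨x⟩) and vⱼ ∈ ℂ⟨x⟩^{e×d}, all of degree at most δ, with μ·I_d − f = Σᵢ sᵢ*sᵢ + Σⱼ vⱼ*Lvⱼ in M_d(ℂ⟨x⟩). -/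

import Mathlib

open scoped Kronecker Matrix ComplexOrder

/-- Noncommutative polynomials: the free `ℂ`-algebra `ℂ⟨x₁,…,xₙ⟩` on `n` generators. -/
abbrev FreeAlg (n : ℕ) := FreeAlgebra ℂ (Fin n)

/-- Evaluation of a matrix of noncommutative polynomials at an `n`-tuple of `k × k` complex
matrices, i.e. the image under `id ⊗ ev_X`. -/
noncomputable def evalM {n k : ℕ} {I J : Type*} (f : Matrix I J (FreeAlg n))
    (X : Fin n → Matrix (Fin k) (Fin k) ℂ) : Matrix (I × Fin k) (J × Fin k) ℂ :=
  fun p q => FreeAlgebra.lift ℂ X (f p.1 q.1) p.2 q.2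

/-- The conjugate-linear involutive anti-automorphism on `ℂ⟨x⟩` fixing the generators:
reverse each word and conjugate each coefficient. -/
noncomputable def nstar {n : ℕ} (a : FreeAlg n) : FreeAlg n :=
  (FreeAlgebra.equivMonoidAlgebraFreeMonoid).symm
    (MonoidAlgebra.ofCoeff (Finsupp.mapDomain FreeMonoid.reverse
      (Finsupp.mapRange (starRingEnd ℂ) (map_zero _)
        ((FreeAlgebra.equivMonoidAlgebraFreeMonoid) a).coeff)))

/-- Conjugate-transpose of a matrix over `ℂ⟨x⟩`. -/
noncomputable def adjM {n : ℕ} {I J : Type*} (f : Matrix I J (FreeAlg n)) :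
    Matrix J I (FreeAlg n) :=
  fun i j => nstar (f j i)

/-- A matrix `f` over `ℂ⟨x⟩` is hermitian if `f = f*`. -/
def IsHermPoly {n : ℕ} {I : Type*} (f : Matrix I I (FreeAlg n)) : Prop :=
  ∀ i j, f i j = nstar (f j i)

/-- Evaluation `L(X) = A₀ ⊗ I + ∑ⱼ Aⱼ ⊗ Xⱼ` of a linear matrix pencil at a matrix tuple. -/
noncomputable def pencilK {n d k : ℕ} (A0 : Matrix (Fin d) (Fin d) ℂ)
    (A : Fin n → Matrix (Fin d) (Fin d) ℂ) (X : Fin n → Matrix (Fin k) (Fin k) ℂ) :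
    Matrix (Fin d × Fin k) (Fin d × Fin k) ℂ :=
  A0 ⊗ₖ (1 : Matrix (Fin k) (Fin k) ℂ) + ∑ j, A j ⊗ₖ X j

/-- Evaluation `L(X) = I ⊗ I + ∑ⱼ Aⱼ ⊗ Xⱼ` of a monic linear matrix pencil. -/
noncomputable def monicK {n d k : ℕ} (A : Fin n → Matrix (Fin d) (Fin d) ℂ)
    (X : Fin n → Matrix (Fin k) (Fin k) ℂ) : Matrix (Fin d × Fin k) (Fin d × Fin k) ℂ :=
  1 + ∑ j, A j ⊗ₖ X j

/-- The monic pencil `I + ∑ⱼ Aⱼ xⱼ` as a matrix of noncommutative polynomials. -/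
noncomputable def monicPoly {n e : ℕ} (A : Fin n → Matrix (Fin e) (Fin e) ℂ) :
    Matrix (Fin e) (Fin e) (FreeAlg n) :=
  1 + ∑ j, (A j).map (fun c => c • FreeAlgebra.ι ℂ j)

/-- The subspace of noncommutative polynomials of degree at most `δ`:
the `ℂ`-linear span of products of at most `δ` generators. -/
noncomputable def degLE (n δ : ℕ) : Submodule ℂ (FreeAlg n) :=
  Submodule.span ℂ
    {a | ∃ w : List (Fin n), w.length ≤ δ ∧ a = (w.map (FreeAlgebra.ι ℂ)).prod}

/-- A matrix over `ℂ⟨x⟩` has degree at most `δ` if each entry does. -/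
def matDegLE {n : ℕ} {I J : Type*} (f : Matrix I J (FreeAlg n)) (δ : ℕ) : Prop :=
  ∀ i j, f i j ∈ degLE n δ

/-- The degree of a matrix of noncommutative polynomials: the least `δ` such that every entry
lies in the span of words of length at most `δ`. -/
noncomputable def matDeg {n : ℕ} {I J : Type*} (f : Matrix I J (FreeAlg n)) : ℕ :=
  sInf {δ | matDegLE f δ}

/-- Evaluation of `f` at the zero scalar tuple, `f(0) ∈ M_d(ℂ)`. -/
noncomputable def evalZero {n : ℕ} {I J : Type*} (f : Matrix I J (FreeAlg n)) :
    Matrix I J ℂ :=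
  f.map (⇑(FreeAlgebra.lift ℂ (fun _ : Fin n => (0 : ℂ))))

/-!
Suppose `g = μ - f` is not a sum of terms `s* s` and `v* L v` with `s`, `v` of degree at most `δ`.
With `P = 1 ⊕ L` such sums are the sums of weighted squares `v* P v`. As `P` has constant term `1`,
the lowest-order coefficients show that no sum of nonzero weighted squares vanishes; by
compactness of the unit sphere and Hahn–Banach, some hermitian functional `Λ` is negative at `g` and
strictly positive at every nonzero weighted square. Compressing multiplication by the generators to
polynomials of degree at most `δ`, with the inner product `⟨v, w⟩ = Λ (v* w)`, yields hermitian
matrices `X`. Since `L` has degree one, `L(X)` represents the form `Λ (v* L w)`, so `L(X) ⪰ 0`; and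
since every word of length at most `2δ + 1` factors as `u* c w` with `u`, `w` of length at most `δ`
and `c` of length at most one, `⟨g(X) ξ, ξ⟩ = Λ g < 0` for the vector `ξ` of the polynomial `1`.
-/

namespace FreeSpectrahedron

open scoped TensorProduct

section Convexity

variable {E : Type*} [AddCommGroup E] [Module ℝ E]

theorem convexHull_eq_iUnion_image_stdSimplex (s : Set E) [FiniteDimensional ℝ (vectorSpan ℝ s)] :
    convexHull ℝ s = ⋃ m ∈ Finset.range (Module.finrank ℝ (vectorSpan ℝ s) + 2),
      (fun p : (Fin m → ℝ) × (Fin m → E) => ∑ i, p.1 i • p.2 i) ''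
        (stdSimplex ℝ (Fin m) ×ˢ Set.univ.pi fun _ => s) := by
  refine Set.Subset.antisymm (fun x hx => ?_) (Set.iUnion₂_subset fun m _ => ?_)
  · obtain ⟨ι, _, z, w, hz, hind, hw, hsum, rfl⟩ := eq_pos_convex_span_of_mem_convexHull hx
    have hcard : Fintype.card ι ≤ Module.finrank ℝ (vectorSpan ℝ s) + 1 :=
      hind.card_le_finrank_succ.trans <|
        Nat.succ_le_succ <| Submodule.finrank_mono <| vectorSpan_mono ℝ hz
    let φ := (Fintype.equivFin ι).symm
    refine Set.mem_biUnion (Finset.mem_coe.2 <| Finset.mem_range.2 <| Nat.lt_succ_of_le hcard)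
      ⟨(w ∘ φ, z ∘ φ), ⟨⟨fun i => (hw _).le, ?_⟩, fun i _ => hz ⟨_, rfl⟩⟩, ?_⟩
    · exact (φ.sum_comp w).trans hsum
    · exact φ.sum_comp fun i => w i • z i
  · rintro _ ⟨⟨w, z⟩, ⟨hw, hz⟩, rfl⟩
    exact (convex_convexHull ℝ s).sum_mem (fun i _ => hw.1 i) hw.2
      fun i _ => subset_convexHull ℝ s (hz i trivial)

theorem isCompact_convexHull [TopologicalSpace E] [ContinuousAdd E] [ContinuousSMul ℝ E]
    {s : Set E} [FiniteDimensional ℝ (vectorSpan ℝ s)] (hs : IsCompact s) :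
    IsCompact (convexHull ℝ s) := by
  rw [convexHull_eq_iUnion_image_stdSimplex]
  refine Finset.isCompact_biUnion _ fun m _ => IsCompact.image ?_ (by fun_prop)
  exact (isCompact_stdSimplex ℝ (Fin m)).prod (isCompact_univ_pi fun _ => hs)

theorem zero_notMem_convexHull_insert_neg {s : Set E} (h0 : 0 ∉ convexHull ℝ s) {g : E}
    (hg : g ∉ PointedCone.hull ℝ s) : 0 ∉ convexHull ℝ (insert (-g) s) := by
  rcases s.eq_empty_or_nonempty with rfl | hne
  · rw [insert_empty_eq, convexHull_singleton, Set.mem_singleton_iff, eq_comm, neg_eq_zero]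
    rintro rfl
    exact hg (zero_mem _)
  rw [convexHull_insert hne, convexJoin_singleton_left]
  simp only [Set.mem_iUnion, not_exists]
  rintro y hy ⟨a, b, ha, hb, hab, h⟩
  rcases ha.eq_or_lt with rfl | ha
  · obtain rfl : b = 1 := by simpa only [zero_add] using hab
    rw [zero_smul, one_smul, zero_add] at h
    exact h0 (h ▸ hy)
  · have hgy : g = (⟨a⁻¹ * b, by positivity⟩ : {c : ℝ // 0 ≤ c}) • y := by
      rw [Nonneg.mk_smul, mul_smul, eq_inv_smul_iff₀ ha.ne']
      rwa [smul_neg, neg_add_eq_zero] at h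
    have : convexHull ℝ s ⊆ PointedCone.hull ℝ s :=
      convexHull_min PointedCone.subset_hull (PointedCone.convex _)
    exact hg (hgy ▸ Submodule.smul_mem _ _ (this hy))

theorem exists_continuousLinearMap_pos_neg [TopologicalSpace E] [IsTopologicalAddGroup E]
    [ContinuousSMul ℝ E] [LocallyConvexSpace ℝ E] [T2Space E] {s : Set E}
    [FiniteDimensional ℝ (vectorSpan ℝ s)] (hs : IsCompact s) (h0 : 0 ∉ convexHull ℝ s)
    {g : E} (hg : g ∉ PointedCone.hull ℝ s) : ∃ ℓ : E →L[ℝ] ℝ, (∀ x ∈ s, 0 < ℓ x) ∧ ℓ g < 0 := by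
  have hfin : FiniteDimensional ℝ (vectorSpan ℝ (insert (-g) s)) :=
    finiteDimensional_vectorSpan_insert_set ℝ s (-g)
  obtain ⟨ℓ, u, hu, hpos⟩ := geometric_hahn_banach_point_closed (convex_convexHull ℝ _)
    (isCompact_convexHull (hs.insert _)).isClosed
    (zero_notMem_convexHull_insert_neg h0 hg)
  rw [map_zero] at hu
  have hpos' (x) (hx : x ∈ insert (-g) s) : 0 < ℓ x := hu.trans (hpos x (subset_convexHull ℝ _ hx))
  refine ⟨ℓ, fun x hx => hpos' x (Set.mem_insert_of_mem _ hx), ?_⟩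
  simpa only [map_neg, neg_pos] using hpos' _ (Set.mem_insert _ _)

theorem exists_dual_pos_neg {V : Type*} [AddCommGroup V] [Module ℝ V] [FiniteDimensional ℝ V]
    (B : V →ₗ[ℝ] V →ₗ[ℝ] E) (h0 : 0 ∉ convexHull ℝ ((fun v => B v v) '' {0}ᶜ)) {g : E}
    (hg : g ∉ PointedCone.hull ℝ (Set.range fun v => B v v)) :
    ∃ ℓ : E →ₗ[ℝ] ℝ, (∀ v ≠ 0, 0 < ℓ (B v v)) ∧ ℓ g < 0 := by
  -- The weak topology makes every linear functional continuous, so any `E` is admissible.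
  let τ : TopologicalSpace E := WeakBilin.instTopologicalSpace (Module.Dual.eval ℝ E)
  have : IsTopologicalAddGroup E :=
    inferInstanceAs (IsTopologicalAddGroup (WeakBilin (Module.Dual.eval ℝ E)))
  have : ContinuousSMul ℝ E := inferInstanceAs (ContinuousSMul ℝ (WeakBilin (Module.Dual.eval ℝ E)))
  have : LocallyConvexSpace ℝ E :=
    inferInstanceAs (LocallyConvexSpace ℝ (WeakBilin (Module.Dual.eval ℝ E)))
  have : T2Space E := (WeakBilin.isEmbedding (Module.eval_apply_injective ℝ)).t2Space
  let φ := (Module.finBasis ℝ V).equivFun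
  let : NormedAddCommGroup V := .induced V _ φ.toLinearMap φ.injective
  let : NormedSpace ℝ V := .induced ℝ V _ φ.toLinearMap
  have hfin : FiniteDimensional ℝ (vectorSpan ℝ ((fun v => B v v) '' Metric.sphere 0 1)) := by
    refine Submodule.finiteDimensional_of_le (S₂ := LinearMap.range (TensorProduct.lift B))
      (Submodule.span_le.2 ?_)
    rintro _ ⟨_, ⟨v, -, rfl⟩, _, ⟨w, -, rfl⟩, rfl⟩
    exact sub_mem ⟨v ⊗ₜ v, TensorProduct.lift.tmul v v⟩ ⟨w ⊗ₜ w, TensorProduct.lift.tmul w w⟩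
  have hcont : Continuous fun v => B v v :=
    WeakBilin.continuous_of_continuous_eval _ fun ℓ =>
      (B.compr₂ ℓ).toContinuousBilinearMap.continuous₂.comp (continuous_id.prodMk continuous_id)
  obtain ⟨ℓ, hpos, hneg⟩ := exists_continuousLinearMap_pos_neg
    ((isCompact_sphere 0 1).image hcont)
    (fun h => h0 (convexHull_mono (Set.image_mono fun v hv =>
      Metric.ne_of_mem_sphere hv one_ne_zero) h))
    (fun h => hg (Submodule.span_mono (Set.image_subset_range _ _) h))
  refine ⟨ℓ, fun v hv => ?_, hneg⟩
  have hinv : 0 < ‖v‖⁻¹ := inv_pos.2 (norm_pos_iff.2 hv)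
  have hunit : ‖v‖⁻¹ • v ∈ Metric.sphere 0 1 :=
    mem_sphere_zero_iff_norm.2 (norm_smul_inv_norm (𝕜 := ℝ) hv)
  simpa only [map_smul, LinearMap.smul_apply, smul_eq_mul, ContinuousLinearMap.coe_coe,
    mul_pos_iff_of_pos_left hinv] using hpos _ ⟨_, hunit, rfl⟩

open scoped ComplexStarModule in
theorem exists_complexLinear_extension {F : Type*} [AddCommGroup F] [Module ℂ F] [StarAddMonoid F]
    [StarModule ℂ F] (ℓ : F →ₗ[ℝ] ℝ) : ∃ Λ : F →ₗ[ℂ] ℂ,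
      (∀ p, Λ (star p) = star (Λ p)) ∧ ∀ p, IsSelfAdjoint p → Λ p = ℓ p := by
  let Λ : F →ₗ[ℂ] ℂ :=
    { toFun p := ℓ (ℜ p) + ℓ (ℑ p) * Complex.I
      map_add' p q := by
        simp only [map_add, AddSubgroup.coe_add, Complex.ofReal_add]
        ring
      map_smul' c p := by
        simp only [realPart_smul, imaginaryPart_smul]
        simp [Complex.ext_iff, selfAdjoint.val_smul, AddSubgroupClass.coe_sub] }
  refine ⟨Λ, fun p => ?_, fun p hp => ?_⟩
  · have hre : (ℜ (star p) : F) = ℜ p := by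
      rw [realPart_apply_coe, realPart_apply_coe, star_star, add_comm]
    have him : (ℑ (star p) : F) = -ℑ p := by
      rw [imaginaryPart_apply_coe, imaginaryPart_apply_coe, star_star, ← neg_sub, smul_neg,
        smul_neg]
    simp [Λ, hre, him]
  · simp [Λ, hp.coe_realPart, hp.imaginaryPart]

theorem exists_fin_sum_of_mem_closure_range {V M : Type*} [AddCommMonoid M] {f : V → M}
    {g : M} (hg : g ∈ AddSubmonoid.closure (Set.range f)) :
    ∃ (m : ℕ) (v : Fin m → V), ∑ i, f (v i) = g := by
  obtain ⟨l, hl, rfl⟩ := AddSubmonoid.exists_list_of_mem_closure hg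
  choose v hv using hl
  exact ⟨l.length, fun i => v _ (l.get_mem i), by
    simp only [hv, List.get_eq_getElem, Fin.sum_univ_getElem]⟩

section Sesquilinear

variable {V F : Type*} [AddCommGroup V] [Module ℂ V] [AddCommGroup F] [Module ℂ F]
  (B : V →ₗ⋆[ℂ] V →ₗ[ℂ] F)

theorem smul_sesquilinear_self {c : ℝ} (hc : 0 ≤ c) (v : V) :
    c • B v v = B ((√c : ℂ) • v) ((√c : ℂ) • v) := by
  rw [LinearMap.map_smulₛₗ₂, map_smul, Complex.conj_ofReal, smul_smul, ← Complex.ofReal_mul,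
    Real.mul_self_sqrt hc, Complex.coe_smul]

theorem hull_range_sesquilinear_subset_closure :
    (PointedCone.hull ℝ (Set.range fun v => B v v) : Set F) ⊆
      AddSubmonoid.closure (Set.range fun v => B v v) := by
  intro p hp
  induction hp using Submodule.span_induction with
  | mem p hp => exact AddSubmonoid.subset_closure hp
  | zero => exact zero_mem _
  | add p q _ _ hp hq => exact add_mem hp hq
  | smul c p hp' hp =>
    clear hp'
    induction hp using AddSubmonoid.closure_induction with
    | mem p hp =>
      obtain ⟨v, rfl⟩ := hp
      exact AddSubmonoid.subset_closure ⟨_, (smul_sesquilinear_self B c.2 v).symm⟩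
    | zero => rw [smul_zero]; exact zero_mem _
    | add p q _ _ hp hq => rw [smul_add]; exact add_mem hp hq

theorem zero_notMem_convexHull_sesquilinear
    (hB : ∀ (m : ℕ) (v : Fin m → V), ∑ i, B (v i) (v i) = 0 → v = 0) :
    0 ∉ convexHull ℝ ((fun v => B v v) '' {0}ᶜ) := by
  intro h
  obtain ⟨ι, _, z, c, hz, -, hc, hsum, hzero⟩ := eq_pos_convex_span_of_mem_convexHull h
  choose v hv hvz using fun i => hz ⟨i, rfl⟩
  let φ := (Fintype.equivFin ι).symm
  have hsquares : ∑ i, B ((√(c (φ i)) : ℂ) • v (φ i)) ((√(c (φ i)) : ℂ) • v (φ i)) = 0 := by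
    rw [← hzero, ← φ.sum_comp]
    exact Finset.sum_congr rfl fun i _ => by
      rw [← smul_sesquilinear_self B (hc _).le, ← hvz]
  obtain ⟨i, -, -⟩ := Finset.exists_ne_zero_of_sum_ne_zero (hsum.trans_ne one_ne_zero)
  have hvi := congrFun (hB _ (fun i => (√(c (φ i)) : ℂ) • v (φ i)) hsquares) (φ.symm i)
  rw [φ.apply_symm_apply] at hvi
  have hsqrt : (√(c i) : ℂ) ≠ 0 := Complex.ofReal_ne_zero.2 (Real.sqrt_pos.2 (hc i)).ne'
  exact (smul_ne_zero hsqrt (hv i)) hvi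

theorem exists_hermitian_functional_pos_neg [FiniteDimensional ℂ V] [StarAddMonoid F]
    [StarModule ℂ F] (hB : ∀ v, IsSelfAdjoint (B v v))
    (hdef : ∀ (m : ℕ) (v : Fin m → V), ∑ i, B (v i) (v i) = 0 → v = 0) {g : F}
    (hg : IsSelfAdjoint g) (hgB : g ∉ AddSubmonoid.closure (Set.range fun v => B v v)) :
    ∃ Λ : F →ₗ[ℂ] ℂ, (∀ p, Λ (star p) = star (Λ p)) ∧ (∀ v ≠ 0, 0 < Λ (B v v)) ∧ Λ g < 0 := by
  have hfin : FiniteDimensional ℝ V := FiniteDimensional.complexToReal V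
  let Bℝ : V →ₗ[ℝ] V →ₗ[ℝ] F := LinearMap.mk₂ ℝ (fun v w => B v w)
    (fun v w u => LinearMap.map_add₂ B v w u)
    (fun c v w => by
      rw [← Complex.coe_smul, LinearMap.map_smulₛₗ₂, Complex.conj_ofReal, Complex.coe_smul])
    (fun v w u => map_add _ _ _)
    (fun c v w => by rw [← Complex.coe_smul, map_smul, Complex.coe_smul])
  obtain ⟨ℓ, hpos, hneg⟩ := exists_dual_pos_neg Bℝ (zero_notMem_convexHull_sesquilinear B hdef)
    fun h => hgB (hull_range_sesquilinear_subset_closure B h)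
  obtain ⟨Λ, hstar, hΛ⟩ := exists_complexLinear_extension ℓ
  refine ⟨Λ, hstar, fun v hv => ?_, ?_⟩
  · rw [hΛ _ (hB v)]
    exact_mod_cast hpos v hv
  · rw [hΛ _ hg]
    exact_mod_cast hneg

end Sesquilinear

end Convexity

section Matrices

theorem mul_mul_apply_eq_dotProduct {R I J K L : Type*} [NonUnitalSemiring R] [Fintype J]
    [Fintype K] (A : Matrix I J R) (B : Matrix J K R) (C : Matrix K L R) (i : I) (l : L) :
    (A * B * C) i l = A i ⬝ᵥ (B *ᵥ C.col l) := by
  rw [Matrix.mul_assoc]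
  rfl

theorem conjTranspose_mul_fromBlocks_one_mul {R I J K : Type*} [Fintype J] [Fintype K]
    [DecidableEq J] [Semiring R] [StarRing R] (Q : Matrix K K R) (v : Matrix (J ⊕ K) I R) :
    vᴴ * (Matrix.fromBlocks 1 0 0 Q : Matrix (J ⊕ K) (J ⊕ K) R) * v =
      v.toRows₁ᴴ * v.toRows₁ + v.toRows₂ᴴ * Q * v.toRows₂ := by
  conv_lhs => rw [← v.fromRows_toRows]
  rw [Matrix.conjTranspose_fromRows_eq_fromCols_conjTranspose, Matrix.fromCols_mul_fromBlocks,
    Matrix.fromCols_mul_fromRows]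
  simp only [Matrix.mul_one, Matrix.mul_zero, add_zero, zero_add]

open scoped MatrixOrder in
theorem exists_conjTranspose_mul_eq_of_posDef {B : Type*} [Fintype B] [DecidableEq B]
    {G : Matrix B B ℂ} (hG : G.PosDef) :
    ∃ (k : ℕ) (R : Matrix (Fin k) B ℂ) (S : Matrix B (Fin k) ℂ),
      Rᴴ * R = G ∧ R * S = 1 ∧ S * R = 1 := by
  obtain ⟨Q, hQ⟩ := CStarAlgebra.nonneg_iff_eq_star_mul_self.1 hG.posSemidef.nonneg
  have hunit : IsUnit Q := isUnit_of_mul_isUnit_right (x := star Q) (hQ ▸ hG.isUnit)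
  obtain ⟨T, hQT, hTQ⟩ := isUnit_iff_exists.1 hunit
  let φ := (Fintype.equivFin B).symm
  refine ⟨Fintype.card B, Q.submatrix φ id, T.submatrix id φ, ?_, ?_, ?_⟩
  · rw [Matrix.conjTranspose_submatrix, Matrix.submatrix_mul_equiv, hQ]
    rfl
  · rw [← Matrix.submatrix_mul _ _ _ id _ Function.bijective_id, hQT, Matrix.submatrix_one_equiv]
  · rw [Matrix.submatrix_mul_equiv, hTQ, Matrix.submatrix_id_id]

end Matrices

section Words

variable {R X : Type*} [CommSemiring R]

/-- The monomial of `R⟨X⟩` spelled by a list of generators. -/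
def word (w : List X) : FreeAlgebra R X :=
  (w.map (FreeAlgebra.ι R)).prod

/-- The coefficient of the monomial `word w` in a noncommutative polynomial. -/
noncomputable def coeff (w : List X) : FreeAlgebra R X →ₗ[R] R :=
  (FreeAlgebra.basisFreeMonoid R X).coord (FreeMonoid.ofList w)

theorem word_nil : word [] = (1 : FreeAlgebra R X) :=
  rfl

theorem word_singleton (x : X) : word [x] = FreeAlgebra.ι R x := by
  rw [word, List.map_singleton, List.prod_singleton]

theorem word_append (u w : List X) : word (u ++ w) = (word u * word w : FreeAlgebra R X) := by
  rw [word, List.map_append, List.prod_append]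
  rfl

theorem word_cons (x : X) (w : List X) : word (x :: w) = FreeAlgebra.ι R x * word w := by
  rw [word, List.map_cons, List.prod_cons]
  rfl

theorem basisFreeMonoid_ofList (w : List X) :
    FreeAlgebra.basisFreeMonoid R X (FreeMonoid.ofList w) = word w := by
  simp [FreeAlgebra.basisFreeMonoid, FreeAlgebra.equivMonoidAlgebraFreeMonoid, word,
    FreeMonoid.lift_ofList]

theorem coeff_eq_coeff_equivMonoidAlgebraFreeMonoid (w : List X) (a : FreeAlgebra R X) :
    coeff w a = (FreeAlgebra.equivMonoidAlgebraFreeMonoid a).coeff (FreeMonoid.ofList w) :=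
  rfl

theorem coeff_ext {a b : FreeAlgebra R X} (h : ∀ w, coeff w a = coeff w b) : a = b :=
  (FreeAlgebra.basisFreeMonoid R X).ext_elem h

theorem coeff_word [DecidableEq X] (u w : List X) :
    coeff u (word w : FreeAlgebra R X) = if w = u then 1 else 0 := by
  rw [← basisFreeMonoid_ofList, coeff, Module.Basis.coord_apply, Module.Basis.repr_self,
    Finsupp.single_apply_left FreeMonoid.ofList.injective]
  exact Finsupp.single_apply

theorem mem_span_range_word (a : FreeAlgebra R X) :
    a ∈ Submodule.span R (Set.range (word : List X → FreeAlgebra R X)) := by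
  simp only [← funext basisFreeMonoid_ofList]
  exact (FreeAlgebra.basisFreeMonoid R X).mem_span a

theorem coeff_append_mul {a b : FreeAlgebra R X} {u w : List X}
    (ha : ∀ v, v.length < u.length → coeff v a = 0)
    (hb : ∀ v, v.length < w.length → coeff v b = 0) :
    coeff (u ++ w) (a * b) = coeff u a * coeff w b := by
  simp only [coeff_eq_coeff_equivMonoidAlgebraFreeMonoid, map_mul, FreeMonoid.ofList_append] at *
  refine MonoidAlgebra.coeff_mul_mul_of_uniqueMul fun p q hp hq hpq => ?_
  have hlenp : u.length ≤ p.toList.length := by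
    by_contra! h
    exact Finsupp.mem_support_iff.1 hp (ha _ h)
  have hlenq : w.length ≤ q.toList.length := by
    by_contra! h
    exact Finsupp.mem_support_iff.1 hq (hb _ h)
  have happ : p.toList ++ q.toList = u ++ w := hpq
  have hlen : p.toList.length + q.toList.length = u.length + w.length := by
    rw [← List.length_append, happ, List.length_append]
  have hlenu : p.toList.length = u.length := by lia
  exact List.append_inj happ hlenu

theorem coeff_mul_eq_zero {a b : FreeAlgebra R X} {w : List X}
    (h : ∀ u v, u ++ v = w → coeff u a = 0 ∨ coeff v b = 0) : coeff w (a * b) = 0 := by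
  classical
  simp only [coeff_eq_coeff_equivMonoidAlgebraFreeMonoid, map_mul] at *
  by_contra hw
  obtain ⟨p, hp, q, hq, hpq⟩ := Finset.mem_mul.1
    (MonoidAlgebra.support_coeff_mul_subset _ _ (Finsupp.mem_support_iff.2 hw))
  rcases h p.toList q.toList hpq with h | h
  exacts [Finsupp.mem_support_iff.1 hp h, Finsupp.mem_support_iff.1 hq h]

end Words

variable {n : ℕ}

section Star

theorem coeff_nstar (w : List (Fin n)) (a : FreeAlg n) :
    coeff w (nstar a) = star (coeff w.reverse a) := by
  have hinj : Function.Injective (FreeMonoid.reverse (α := Fin n)) := List.reverse_injective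
  rw [coeff_eq_coeff_equivMonoidAlgebraFreeMonoid, nstar, AlgEquiv.apply_symm_apply,
    MonoidAlgebra.coeff_ofCoeff, ← List.reverse_reverse w]
  exact (Finsupp.mapDomain_apply hinj _ (FreeMonoid.ofList w.reverse)).trans (by
    rw [List.reverse_reverse, Finsupp.mapRange_apply]
    rfl)

theorem nstar_word (w : List (Fin n)) : nstar (word w) = word w.reverse := by
  refine coeff_ext fun u => ?_
  rw [coeff_nstar, coeff_word, coeff_word, apply_ite star, star_one, star_zero]
  exact if_congr List.reverse_eq_iff.symm rfl rfl

theorem nstar_nstar (a : FreeAlg n) : nstar (nstar a) = a :=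
  coeff_ext fun w => by rw [coeff_nstar, coeff_nstar, List.reverse_reverse, star_star]

theorem nstar_add (a b : FreeAlg n) : nstar (a + b) = nstar a + nstar b :=
  coeff_ext fun w => by simp only [coeff_nstar, map_add, star_add]

theorem nstar_smul (c : ℂ) (a : FreeAlg n) : nstar (c • a) = star c • nstar a :=
  coeff_ext fun w => by simp only [coeff_nstar, map_smul, smul_eq_mul, star_mul']

theorem nstar_mul (a b : FreeAlg n) : nstar (a * b) = nstar b * nstar a := by
  have h0 : nstar (0 : FreeAlg n) = 0 :=
    coeff_ext fun w => by rw [coeff_nstar, map_zero, map_zero, star_zero]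
  induction mem_span_range_word a, mem_span_range_word b using Submodule.span_induction₂ with
  | mem_mem _ _ hu hw =>
    obtain ⟨u, rfl⟩ := hu
    obtain ⟨w, rfl⟩ := hw
    rw [← word_append, nstar_word, nstar_word, nstar_word, List.reverse_append, word_append]
  | zero_left => rw [zero_mul, h0, mul_zero]
  | zero_right => rw [mul_zero, h0, zero_mul]
  | add_left _ _ _ _ _ _ h₁ h₂ => rw [add_mul, nstar_add, h₁, h₂, nstar_add, mul_add]
  | add_right _ _ _ _ _ _ h₁ h₂ => rw [mul_add, nstar_add, h₁, h₂, nstar_add, add_mul]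
  | smul_left _ _ _ _ _ h => rw [smul_mul_assoc, nstar_smul, h, nstar_smul, mul_smul_comm]
  | smul_right _ _ _ _ _ h => rw [mul_smul_comm, nstar_smul, h, nstar_smul, smul_mul_assoc]

end Star

-- Takes precedence over Mathlib's star on the free algebra, which does not conjugate scalars.
noncomputable local instance : StarRing (FreeAlg n) where
  star := nstar
  star_involutive := nstar_nstar
  star_mul := nstar_mul
  star_add := nstar_add

local instance : StarModule ℂ (FreeAlg n) := ⟨nstar_smul⟩

theorem star_word (w : List (Fin n)) : star (word w : FreeAlg n) = word w.reverse :=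
  nstar_word w

theorem coeff_star (w : List (Fin n)) (a : FreeAlg n) :
    coeff w (star a) = star (coeff w.reverse a) :=
  coeff_nstar w a

theorem star_ι (x : Fin n) : star (FreeAlgebra.ι ℂ x) = FreeAlgebra.ι ℂ x := by
  rw [← word_singleton, star_word, List.reverse_singleton]

section Degree

variable {δ ε : ℕ} {I J : Type*}

theorem word_mem_degLE {w : List (Fin n)} (hw : w.length ≤ δ) : word w ∈ degLE n δ :=
  Submodule.subset_span ⟨w, hw, rfl⟩

theorem degLE_mono (h : δ ≤ ε) : degLE n δ ≤ degLE n ε :=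
  Submodule.span_mono fun _ ⟨w, hw, ha⟩ => ⟨w, hw.trans h, ha⟩

theorem one_mem_degLE : (1 : FreeAlg n) ∈ degLE n δ :=
  word_mem_degLE (w := []) δ.zero_le

theorem eventually_mem_degLE (a : FreeAlg n) : ∀ᶠ N in Filter.atTop, a ∈ degLE n N := by
  induction mem_span_range_word a using Submodule.span_induction with
  | mem _ h =>
    obtain ⟨w, rfl⟩ := h
    exact (Filter.eventually_ge_atTop w.length).mono fun N => word_mem_degLE
  | zero => exact Filter.Eventually.of_forall fun N => zero_mem _
  | add a b _ _ ha hb => exact (ha.and hb).mono fun N h => add_mem h.1 h.2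
  | smul c a _ ha => exact ha.mono fun N h => Submodule.smul_mem _ c h

theorem matDegLE_matDeg [Finite I] [Finite J] (f : Matrix I J (FreeAlg n)) :
    matDegLE f (matDeg f) := by
  have h : ∀ᶠ N in Filter.atTop, matDegLE f N :=
    Filter.eventually_all.2 fun i => Filter.eventually_all.2 fun j => eventually_mem_degLE (f i j)
  exact Nat.sInf_mem h.exists

theorem matDegLE_one [DecidableEq I] : matDegLE (1 : Matrix I I (FreeAlg n)) δ := fun i j => by
  rw [Matrix.one_apply]
  split_ifs
  exacts [one_mem_degLE, zero_mem _]

theorem matDegLE_smul_one_sub [DecidableEq I] {f : Matrix I I (FreeAlg n)} (hf : matDegLE f δ)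
    (hδ : δ ≤ ε) (c : ℂ) : matDegLE (c • 1 - f) ε := fun i j =>
  sub_mem (Submodule.smul_mem _ c (matDegLE_one i j)) (degLE_mono hδ (hf i j))

theorem matDegLE_monicPoly {e : ℕ} (A : Fin n → Matrix (Fin e) (Fin e) ℂ) :
    matDegLE (monicPoly A) 1 := fun i j => by
  rw [monicPoly, Matrix.add_apply, Matrix.sum_apply]
  refine add_mem (matDegLE_one i j) (sum_mem fun x _ => Submodule.smul_mem _ _ ?_)
  rw [← word_singleton]
  exact word_mem_degLE le_rfl

end Degree

section Evaluation

variable {k : ℕ} {X : Fin n → Matrix (Fin k) (Fin k) ℂ} {I J K : Type*}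

theorem evalM_add (f g : Matrix I J (FreeAlg n)) : evalM (f + g) X = evalM f X + evalM g X := by
  ext p q
  simp only [evalM, Matrix.add_apply, map_add]

theorem evalM_sub (f g : Matrix I J (FreeAlg n)) : evalM (f - g) X = evalM f X - evalM g X := by
  ext p q
  simp only [evalM, Matrix.sub_apply, map_sub]

theorem evalM_smul (c : ℂ) (f : Matrix I J (FreeAlg n)) : evalM (c • f) X = c • evalM f X := by
  ext p q
  simp only [evalM, Matrix.smul_apply, map_smul]

theorem evalM_sum {ι : Type*} (s : Finset ι) (f : ι → Matrix I J (FreeAlg n)) :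
    evalM (∑ i ∈ s, f i) X = ∑ i ∈ s, evalM (f i) X := by
  ext p q
  simp only [evalM, Matrix.sum_apply, map_sum]

theorem evalM_one [DecidableEq I] : evalM (1 : Matrix I I (FreeAlg n)) X = 1 := by
  ext ⟨i, p⟩ ⟨j, q⟩
  by_cases h : i = j <;> simp [evalM, Matrix.one_apply, h, Prod.ext_iff]

theorem evalM_mul [Fintype J] (f : Matrix I J (FreeAlg n)) (g : Matrix J K (FreeAlg n)) :
    evalM (f * g) X = evalM f X * evalM g X := by
  ext p q
  simp only [evalM, Matrix.mul_apply, map_sum, map_mul, Matrix.sum_apply, Fintype.sum_prod_type]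

theorem evalM_monicPoly {e : ℕ} (A : Fin n → Matrix (Fin e) (Fin e) ℂ) :
    evalM (monicPoly A) X = monicK A X := by
  rw [monicPoly, monicK, evalM_add, evalM_one, evalM_sum]
  congr! with j
  ext p q
  simp only [evalM, Matrix.map_apply, map_smul, FreeAlgebra.lift_ι_apply, Matrix.smul_apply,
    smul_eq_mul, Matrix.kroneckerMap_apply]

variable (hX : ∀ x, (X x).IsHermitian)
include hX

theorem lift_star (a : FreeAlg n) :
    FreeAlgebra.lift ℂ X (star a) = (FreeAlgebra.lift ℂ X a)ᴴ := by
  induction a using FreeAlgebra.induction with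
  | grade0 c => rw [← algebraMap_star_comm, AlgHom.commutes, AlgHom.commutes, algebraMap_star_comm,
      Matrix.star_eq_conjTranspose]
  | grade1 x => rw [star_ι, FreeAlgebra.lift_ι_apply, (hX x).eq]
  | mul a b ha hb => rw [star_mul, map_mul, map_mul, Matrix.conjTranspose_mul, ha, hb]
  | add a b ha hb => rw [star_add, map_add, map_add, Matrix.conjTranspose_add, ha, hb]

theorem evalM_conjTranspose (f : Matrix I J (FreeAlg n)) : evalM fᴴ X = (evalM f X)ᴴ := by
  ext p q
  simp only [evalM, Matrix.conjTranspose_apply, lift_star hX]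

theorem posSemidef_evalM_conjTranspose_mul_mul [Finite I] [Fintype J] {P : Matrix J J (FreeAlg n)}
    (hP : (evalM P X).PosSemidef) (v : Matrix J I (FreeAlg n)) :
    (evalM (vᴴ * P * v) X).PosSemidef := by
  rw [evalM_mul, evalM_mul, evalM_conjTranspose hX]
  exact hP.conjTranspose_mul_mul_same _

end Evaluation

section Certificates

variable {I J : Type*}

theorem isHermitian_monicPoly {e : ℕ} {A : Fin n → Matrix (Fin e) (Fin e) ℂ}
    (hA : ∀ x, (A x).IsHermitian) : (monicPoly A).IsHermitian := by
  have hsummand (x : Fin n) : ((A x).map fun c => c • FreeAlgebra.ι ℂ x).IsHermitian := by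
    ext i j
    simp only [Matrix.conjTranspose_apply, Matrix.map_apply, star_smul, star_ι, (hA x).apply]
  rw [Matrix.IsHermitian, monicPoly, Matrix.conjTranspose_add, Matrix.conjTranspose_one,
    Matrix.conjTranspose_sum, Finset.sum_congr rfl fun x _ => hsummand x]

theorem isHermitian_smul_one_sub [DecidableEq I] {f : Matrix I I (FreeAlg n)} (hf : IsHermPoly f)
    (μ : ℝ) : ((μ : ℂ) • 1 - f).IsHermitian := by
  have hf' : f.IsHermitian := Matrix.ext fun i j => (hf i j).symm
  rw [Matrix.IsHermitian, Matrix.conjTranspose_sub, Matrix.conjTranspose_smul,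
    Matrix.conjTranspose_one, hf'.eq, Complex.star_def, Complex.conj_ofReal]

theorem map_coeff_nil_one [DecidableEq J] :
    (1 : Matrix J J (FreeAlg n)).map (coeff []) = (1 : Matrix J J ℂ) :=
  Matrix.map_one _ (map_zero _) (by rw [← word_nil, coeff_word, if_pos rfl])

theorem map_coeff_nil_monicPoly {e : ℕ} (A : Fin n → Matrix (Fin e) (Fin e) ℂ) :
    (monicPoly A).map (coeff []) = 1 := by
  have hι (x : Fin n) : coeff [] (FreeAlgebra.ι ℂ x) = 0 := by
    rw [← word_singleton, coeff_word, if_neg (List.cons_ne_nil x [])]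
  rw [monicPoly, Matrix.map_add _ (map_add _), map_coeff_nil_one, add_eq_left]
  ext i j
  simp only [Matrix.map_apply, Matrix.sum_apply, map_sum, map_smul, hι, smul_zero,
    Finset.sum_const_zero, Matrix.zero_apply]

theorem coeff_star_mul_mul {p v w : FreeAlg n} {u : List (Fin n)}
    (hv : ∀ u', u'.length < u.length → coeff u' v = 0)
    (hw : ∀ u', u'.length < u.length → coeff u' w = 0) :
    coeff (u.reverse ++ u) (star v * p * w) = star (coeff u v) * coeff [] p * coeff u w := by
  have hv' (u') (hu' : u'.length < u.reverse.length) : coeff u' (star v) = 0 := by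
    rw [coeff_star, hv _ (by simpa only [List.length_reverse] using hu'), star_zero]
  have hvp (u') (hu' : u'.length < u.reverse.length) : coeff u' (star v * p) = 0 := by
    refine coeff_mul_eq_zero fun a b hab => .inl (hv' a ?_)
    grind
  have h : coeff (u.reverse ++ []) (star v * p) = coeff u.reverse (star v) * coeff [] p :=
    coeff_append_mul hv' fun u' hu' => absurd hu' (Nat.not_lt_zero _)
  rw [coeff_append_mul hvp hw, ← List.append_nil u.reverse, h, coeff_star, List.reverse_reverse]

variable [Fintype J] [DecidableEq J]

theorem eq_zero_of_sum_conjTranspose_mul_mul_eq_zero {ι : Type*} [Fintype ι]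
    {P : Matrix J J (FreeAlg n)} (hP : P.map (coeff []) = 1) {v : ι → Matrix J I (FreeAlg n)}
    (h : ∑ r, (v r)ᴴ * P * v r = 0) : v = 0 := by
  suffices hcoeff : ∀ l (u : List (Fin n)), u.length = l → ∀ r a i, coeff u (v r a i) = 0 by
    ext r a i
    exact coeff_ext fun u => by simpa using hcoeff _ u rfl r a i
  intro l
  induction l using Nat.strong_induction_on with
  | _ l ih =>
    rintro u rfl r a i
    have hlow (r a) (u' : List (Fin n)) (hu' : u'.length < u.length) : coeff u' (v r a i) = 0 :=
      ih _ hu' u' rfl r a i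
    have hentry (r b a) : coeff (u.reverse ++ u) (star (v r b i) * P b a * v r a i) =
        star (coeff u (v r b i)) * (1 : Matrix J J ℂ) b a * coeff u (v r a i) := by
      rw [coeff_star_mul_mul (hlow r b) (hlow r a), ← hP, Matrix.map_apply]
    have hsum : ∑ r, ∑ a, (‖coeff u (v r a i)‖ : ℂ) ^ 2 = 0 := by
      have := congrArg (fun M => coeff (u.reverse ++ u) (M i i)) h
      simpa [Matrix.sum_apply, Matrix.mul_apply, Finset.sum_mul, hentry, Matrix.one_apply,
        Complex.conj_mul'] using this
    norm_cast at hsum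
    have hr := (Finset.sum_eq_zero_iff_of_nonneg fun _ _ =>
      Finset.sum_nonneg fun _ _ => sq_nonneg _).1 hsum r (Finset.mem_univ r)
    have ha := (Finset.sum_eq_zero_iff_of_nonneg fun _ _ => sq_nonneg _).1 hr a (Finset.mem_univ a)
    rwa [sq_eq_zero_iff, norm_eq_zero] at ha

variable [Fintype I]

/-- The index type of the monomials of degree at most `δ`. -/
abbrev Words (n δ : ℕ) := {w : List (Fin n) // w.length ≤ δ}

noncomputable instance (δ : ℕ) : Fintype (Words n δ) :=
  (List.finite_length_le (Fin n) δ).fintype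

variable [DecidableEq I] {δ : ℕ}

/-- The matrix polynomial of degree at most `δ` with prescribed coefficients. -/
noncomputable def ofCoeffs : (J × I × Words n δ → ℂ) →ₗ[ℂ] Matrix J I (FreeAlg n) :=
  Fintype.linearCombination ℂ fun p => Matrix.single p.1 p.2.1 (word p.2.2.1)

theorem ofCoeffs_apply (y : J × I × Words n δ → ℂ) (a : J) (i : I) :
    ofCoeffs y a i = ∑ w : Words n δ, y (a, i, w) • word w.1 := by
  simp [ofCoeffs, Fintype.linearCombination_apply, Matrix.sum_apply, Matrix.single_apply,
    Fintype.sum_prod_type, ite_and]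

theorem matDegLE_ofCoeffs (y : J × I × Words n δ → ℂ) : matDegLE (ofCoeffs y) δ := fun a i => by
  rw [ofCoeffs_apply]
  exact sum_mem fun w _ => Submodule.smul_mem _ _ (word_mem_degLE w.2)

theorem ofCoeffs_injective :
    Function.Injective (ofCoeffs : (J × I × Words n δ → ℂ) →ₗ[ℂ] Matrix J I (FreeAlg n)) := by
  refine (injective_iff_map_eq_zero _).2 fun y hy => funext fun ⟨a, i, u⟩ => ?_
  have := congrArg (coeff u.1) (congrFun₂ hy a i)
  simpa [ofCoeffs_apply, coeff_word, Subtype.coe_inj] using this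

theorem conjTranspose_ofCoeffs_mul_mul (P : Matrix J J (FreeAlg n))
    (y z : J × I × Words n δ → ℂ) :
    (ofCoeffs y)ᴴ * P * ofCoeffs z = ∑ p, ∑ q, (star (y p) * z q) •
      Matrix.single p.2.1 q.2.1 (star (word p.2.2.1) * P p.1 q.1 * word q.2.2.1) := by
  simp only [ofCoeffs, Fintype.linearCombination_apply, Matrix.conjTranspose_sum,
    Matrix.conjTranspose_smul, Matrix.conjTranspose_single, Matrix.sum_mul, Matrix.mul_sum,
    Matrix.smul_mul, Matrix.mul_smul, Matrix.single_mul_mul_single, Finset.smul_sum, smul_smul]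
  rw [Finset.sum_comm]
  simp only [mul_comm]

/-- The sesquilinear form `(v, w) ↦ v* P w` on matrix polynomials of degree at most `δ`. -/
noncomputable def weightedSquare (P : Matrix J J (FreeAlg n)) :
    (J × I × Words n δ → ℂ) →ₗ⋆[ℂ] (J × I × Words n δ → ℂ) →ₗ[ℂ] Matrix I I (FreeAlg n) :=
  LinearMap.mk₂'ₛₗ (starRingEnd ℂ) (RingHom.id ℂ) (fun y z => (ofCoeffs y)ᴴ * P * ofCoeffs z)
    (fun y z t => by rw [map_add, Matrix.conjTranspose_add, Matrix.add_mul, Matrix.add_mul])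
    (fun c y z => by
      rw [map_smul, Matrix.conjTranspose_smul, Matrix.smul_mul, Matrix.smul_mul,
        starRingEnd_apply])
    (fun y z t => by rw [map_add, Matrix.mul_add])
    (fun c y z => by rw [map_smul, Matrix.mul_smul, RingHom.id_apply])

theorem weightedSquare_apply (P : Matrix J J (FreeAlg n)) (y z : J × I × Words n δ → ℂ) :
    weightedSquare P y z = (ofCoeffs y)ᴴ * P * ofCoeffs z :=
  rfl

end Certificates

section Moments

variable {I J : Type*} [DecidableEq I] (δ : ℕ) (Λ : Matrix I I (FreeAlg n) →ₗ[ℂ] ℂ)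

/-- The moment matrix of `Λ` weighted by `a`, with entries `Λ (E_ij ⊗ u* a w)` indexed by pairs
`(i, u)` and `(j, w)`; it represents the Gram form of `Λ` for `a = 1`. -/
noncomputable def hankel : FreeAlg n →ₗ[ℂ] Matrix (I × Words n δ) (I × Words n δ) ℂ where
  toFun a := .of fun p q => Λ (Matrix.single p.1 q.1 (star (word p.2.1) * a * word q.2.1))
  map_add' a b := by
    ext p q
    simp only [mul_add, add_mul, Matrix.single_add, map_add, Matrix.of_apply, Matrix.add_apply]
  map_smul' c a := by
    ext p q
    simp only [mul_smul_comm, smul_mul_assoc, ← Matrix.smul_single, map_smul, Matrix.of_apply,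
      RingHom.id_apply, Matrix.smul_apply]

/-- The localizing matrix of `Λ` at a matrix polynomial `P`: the block matrix of the weighted
moment matrices of the entries of `P`, representing `(v, w) ↦ Λ (v* P w)`. -/
noncomputable def localizing (P : Matrix J J (FreeAlg n)) :
    Matrix (J × I × Words n δ) (J × I × Words n δ) ℂ :=
  .of fun p q => hankel δ Λ (P p.1 q.1) p.2 q.2

theorem hankel_apply (a : FreeAlg n) (p q : I × Words n δ) :
    hankel δ Λ a p q = Λ (Matrix.single p.1 q.1 (star (word p.2.1) * a * word q.2.1)) :=
  rfl

theorem localizing_apply (P : Matrix J J (FreeAlg n)) (p q : J × I × Words n δ) :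
    localizing δ Λ P p q = hankel δ Λ (P p.1 q.1) p.2 q.2 :=
  rfl

variable {δ Λ}

theorem hankel_star (hΛ : ∀ p, Λ (star p) = star (Λ p)) (a : FreeAlg n) :
    hankel δ Λ (star a) = (hankel δ Λ a)ᴴ := by
  ext p q
  rw [Matrix.conjTranspose_apply, hankel_apply, hankel_apply, ← hΛ, Matrix.star_eq_conjTranspose,
    Matrix.conjTranspose_single, star_mul, star_mul, star_star, mul_assoc]

theorem dotProduct_localizing_mulVec [Fintype I] [Fintype J] [DecidableEq J]
    (P : Matrix J J (FreeAlg n)) (y : J × I × Words n δ → ℂ) :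
    star y ⬝ᵥ (localizing δ Λ P *ᵥ y) = Λ (weightedSquare P y y) := by
  rw [weightedSquare_apply, conjTranspose_ofCoeffs_mul_mul]
  simp only [map_sum, map_smul, dotProduct, Matrix.mulVec, localizing_apply, hankel_apply,
    Pi.star_apply, Finset.mul_sum, smul_eq_mul]
  exact Finset.sum_congr rfl fun p _ => Finset.sum_congr rfl fun q _ => by ring

theorem localizing_posDef [Fintype I] [Fintype J] [DecidableEq J]
    (hΛ : ∀ p, Λ (star p) = star (Λ p)) {P : Matrix J J (FreeAlg n)} (hP : P.IsHermitian)
    (hpos : ∀ y : J × I × Words n δ → ℂ, y ≠ 0 → 0 < Λ (weightedSquare P y y)) :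
    (localizing δ Λ P).PosDef := by
  refine .of_dotProduct_mulVec_pos ?_ fun y hy => ?_
  · ext p q
    rw [Matrix.conjTranspose_apply, localizing_apply, localizing_apply, ← hP.apply p.1 q.1,
      hankel_star hΛ, Matrix.conjTranspose_apply]
  · rw [dotProduct_localizing_mulVec]
    exact hpos y hy

theorem hankel_one_posDef_of_localizing_fromBlocks [Finite I] {K : Type*}
    {Q : Matrix K K (FreeAlg n)}
    (h : (localizing δ Λ (Matrix.fromBlocks (1 : Matrix I I (FreeAlg n)) 0 0 Q)).PosDef) :
    (hankel δ Λ 1).PosDef := by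
  have := Fintype.ofFinite I
  rcases isEmpty_or_nonempty I with hI | ⟨⟨i⟩⟩
  · exact .of_dotProduct_mulVec_pos (Subsingleton.elim _ _)
      fun y hy => (hy (Subsingleton.elim _ _)).elim
  · convert h.submatrix (e := fun p => (Sum.inl i, p)) (Prod.mk_right_injective _)
    ext p q
    simp [localizing_apply]

theorem localizing_posSemidef_of_fromBlocks {K : Type*} {Q : Matrix K K (FreeAlg n)}
    (h : (localizing δ Λ (Matrix.fromBlocks (1 : Matrix I I (FreeAlg n)) 0 0 Q)).PosDef) :
    (localizing δ Λ Q).PosSemidef :=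
  h.posSemidef.submatrix (Prod.map Sum.inr id)

end Moments

section GNS

variable {I : Type*} [Fintype I] [DecidableEq I] {δ k : ℕ}
  {Λ : Matrix I I (FreeAlg n) →ₗ[ℂ] ℂ} {R : Matrix (Fin k) (I × Words n δ) ℂ}
  {S : Matrix (I × Words n δ) (Fin k) ℂ}

variable (Λ S) in
/-- The truncated left multiplications by the generators, in the orthonormal basis of the GNS
space of `Λ` described by `S`. -/
noncomputable def gnsTuple (x : Fin n) : Matrix (Fin k) (Fin k) ℂ :=
  Sᴴ * hankel δ Λ (FreeAlgebra.ι ℂ x) * S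

theorem isHermitian_gnsTuple (hΛ : ∀ p, Λ (star p) = star (Λ p)) (x : Fin n) :
    (gnsTuple Λ S x).IsHermitian := by
  rw [gnsTuple, Matrix.IsHermitian, Matrix.conjTranspose_mul, Matrix.conjTranspose_mul,
    ← hankel_star hΛ, star_ι, Matrix.conjTranspose_conjTranspose, Matrix.mul_assoc]

variable (hG : Rᴴ * R = hankel δ Λ 1) (hRS : R * S = 1)
include hG hRS

theorem lift_gnsTuple_of_mem_degLE_one {a : FreeAlg n} (ha : a ∈ degLE n 1) :
    FreeAlgebra.lift ℂ (gnsTuple Λ S) a = Sᴴ * hankel δ Λ a * S := by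
  have hword (w : List (Fin n)) (hw : w.length ≤ 1) :
      FreeAlgebra.lift ℂ (gnsTuple Λ S) (word w) = Sᴴ * hankel δ Λ (word w) * S := by
    rcases w with _ | ⟨x, _ | ⟨y, w⟩⟩
    · rw [word_nil, map_one, ← hG, ← Matrix.mul_assoc, Matrix.mul_assoc, hRS, Matrix.mul_one,
        ← Matrix.conjTranspose_mul, hRS, Matrix.conjTranspose_one]
    · rw [word_singleton, FreeAlgebra.lift_ι_apply, gnsTuple]
    · simp at hw
  induction ha using Submodule.span_induction with
  | mem a h =>
    obtain ⟨w, hw, rfl⟩ := h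
    exact hword w hw
  | zero => rw [map_zero, map_zero, Matrix.mul_zero, Matrix.zero_mul]
  | add a b _ _ ha hb => rw [map_add, map_add, ha, hb, Matrix.mul_add, Matrix.add_mul]
  | smul c a _ ha => rw [map_smul, map_smul, ha, Matrix.mul_smul, Matrix.smul_mul]

theorem evalM_gnsTuple_of_matDegLE_one {J : Type*} [Fintype J] [DecidableEq J]
    {P : Matrix J J (FreeAlg n)} (hP : matDegLE P 1) : evalM P (gnsTuple Λ S) =
      ((1 : Matrix J J ℂ) ⊗ₖ S)ᴴ * localizing δ Λ P * ((1 : Matrix J J ℂ) ⊗ₖ S) := by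
  ext ⟨a, p⟩ ⟨b, q⟩
  rw [evalM, lift_gnsTuple_of_mem_degLE_one hG hRS (hP a b)]
  simp only [Matrix.mul_apply, Matrix.conjTranspose_apply, Matrix.kroneckerMap_apply,
    Matrix.one_apply, localizing_apply, Fintype.sum_prod_type]
  simp [apply_ite (starRingEnd ℂ), Finset.sum_ite_irrel]

variable (hSR : S * R = 1)
include hSR

theorem lift_gnsTuple_word_mulVec_col {w : List (Fin n)} (hw : w.length ≤ δ) (j : I) :
    FreeAlgebra.lift ℂ (gnsTuple Λ S) (word w) *ᵥ R.col (j, ⟨[], δ.zero_le⟩) =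
      R.col (j, ⟨w, hw⟩) := by
  induction w with
  | nil => rw [word_nil, map_one, Matrix.one_mulVec]
  | cons x w ih =>
    have hR : R = Sᴴ * hankel δ Λ 1 := by
      rw [← hG, ← Matrix.mul_assoc, ← Matrix.conjTranspose_mul, hRS, Matrix.conjTranspose_one,
        Matrix.one_mul]
    have hw' : w.length ≤ δ := (Nat.le_succ _).trans hw
    have hshift : (hankel δ Λ (FreeAlgebra.ι ℂ x)).col (j, ⟨w, hw'⟩) =
        (hankel δ Λ 1).col (j, ⟨x :: w, hw⟩) := by
      ext q
      rw [Matrix.col_apply, Matrix.col_apply, hankel_apply, hankel_apply, mul_one, word_cons,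
        mul_assoc]
    calc FreeAlgebra.lift ℂ (gnsTuple Λ S) (word (x :: w)) *ᵥ R.col (j, ⟨[], δ.zero_le⟩)
        = gnsTuple Λ S x *ᵥ R.col (j, ⟨w, hw'⟩) := by
          rw [word_cons, map_mul, FreeAlgebra.lift_ι_apply, ← Matrix.mulVec_mulVec, ih hw']
      _ = (gnsTuple Λ S x * R).col (j, ⟨w, hw'⟩) := rfl
      _ = Sᴴ *ᵥ (hankel δ Λ (FreeAlgebra.ι ℂ x)).col (j, ⟨w, hw'⟩) := by
          rw [gnsTuple, Matrix.mul_assoc, hSR, Matrix.mul_one]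
          rfl
      _ = (Sᴴ * hankel δ Λ 1).col (j, ⟨x :: w, hw⟩) := congrArg (Sᴴ *ᵥ ·) hshift
      _ = R.col (j, ⟨x :: w, hw⟩) := by rw [← hR]

theorem conjTranspose_mul_lift_gnsTuple_mul (hΛ : ∀ p, Λ (star p) = star (Λ p))
    {c : FreeAlg n} (hc : c ∈ degLE n 1) {u w : List (Fin n)} (hu : u.length ≤ δ)
    (hw : w.length ≤ δ) (i j : I) :
    (Rᴴ * FreeAlgebra.lift ℂ (gnsTuple Λ S) (star (word u) * c * word w) * R)
        (i, ⟨[], δ.zero_le⟩) (j, ⟨[], δ.zero_le⟩) =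
      Λ (Matrix.single i j (star (word u) * c * word w)) := by
  have hc' : Rᴴ * FreeAlgebra.lift ℂ (gnsTuple Λ S) c * R = hankel δ Λ c := by
    rw [lift_gnsTuple_of_mem_degLE_one hG hRS hc, Matrix.mul_assoc, Matrix.mul_assoc, hSR,
      Matrix.mul_one, ← Matrix.mul_assoc, ← Matrix.conjTranspose_mul, hSR,
      Matrix.conjTranspose_one, Matrix.one_mul]
  calc (Rᴴ * FreeAlgebra.lift ℂ (gnsTuple Λ S) (star (word u) * c * word w) * R)
        (i, ⟨[], δ.zero_le⟩) (j, ⟨[], δ.zero_le⟩)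
      = ((FreeAlgebra.lift ℂ (gnsTuple Λ S) (word u) * R)ᴴ * FreeAlgebra.lift ℂ (gnsTuple Λ S) c *
          (FreeAlgebra.lift ℂ (gnsTuple Λ S) (word w) * R))
        (i, ⟨[], δ.zero_le⟩) (j, ⟨[], δ.zero_le⟩) := by
        rw [map_mul, map_mul, lift_star (isHermitian_gnsTuple hΛ), Matrix.conjTranspose_mul]
        simp only [Matrix.mul_assoc]
    _ = (Rᴴ * FreeAlgebra.lift ℂ (gnsTuple Λ S) c * R) (i, ⟨u, hu⟩) (j, ⟨w, hw⟩) := by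
        rw [mul_mul_apply_eq_dotProduct, mul_mul_apply_eq_dotProduct]
        exact congrArg₂ (fun y z => star y ⬝ᵥ (FreeAlgebra.lift ℂ (gnsTuple Λ S) c *ᵥ z))
          (lift_gnsTuple_word_mulVec_col hG hRS hSR hu i)
          (lift_gnsTuple_word_mulVec_col hG hRS hSR hw j)
    _ = Λ (Matrix.single i j (star (word u) * c * word w)) := by
        rw [hc', hankel_apply]

theorem conjTranspose_mul_lift_gnsTuple_mul_apply (hΛ : ∀ p, Λ (star p) = star (Λ p))
    {a : FreeAlg n} (ha : a ∈ degLE n (2 * δ + 1)) (i j : I) :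
    (Rᴴ * FreeAlgebra.lift ℂ (gnsTuple Λ S) a * R) (i, ⟨[], δ.zero_le⟩) (j, ⟨[], δ.zero_le⟩) =
      Λ (Matrix.single i j a) := by
  induction ha using Submodule.span_induction with
  | mem a h =>
    obtain ⟨t, ht, rfl⟩ := h
    have hsplit : (word t : FreeAlg n) = star (word (t.take δ).reverse) *
        word ((t.drop δ).take 1) * word (t.drop (δ + 1)) := by
      rw [star_word, List.reverse_reverse, ← word_append, ← word_append, List.append_assoc,
        ← List.drop_drop, List.take_append_drop, List.take_append_drop]
    change (Rᴴ * FreeAlgebra.lift ℂ (gnsTuple Λ S) (word t) * R) _ _ =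
      Λ (Matrix.single i j (word t))
    rw [hsplit]
    exact conjTranspose_mul_lift_gnsTuple_mul hG hRS hSR hΛ
      (word_mem_degLE (List.length_take_le 1 _)) (by grind) (by grind) i j
  | zero => simp only [map_zero, Matrix.mul_zero, Matrix.zero_mul, Matrix.single_zero,
      Matrix.zero_apply]
  | add a b _ _ ha hb => simp only [map_add, Matrix.mul_add, Matrix.add_mul, Matrix.single_add,
      Matrix.add_apply, ha, hb]
  | smul c a _ ha => simp only [map_smul, Matrix.mul_smul, Matrix.smul_mul, ← Matrix.smul_single,
      Matrix.smul_apply, ha]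

theorem dotProduct_evalM_gnsTuple_mulVec (hΛ : ∀ p, Λ (star p) = star (Λ p))
    {g : Matrix I I (FreeAlg n)} (hg : matDegLE g (2 * δ + 1)) {ξ : I × Fin k → ℂ}
    (hξ : ∀ p, ξ p = R p.2 (p.1, ⟨[], δ.zero_le⟩)) :
    star ξ ⬝ᵥ (evalM g (gnsTuple Λ S) *ᵥ ξ) = Λ g := by
  have hentry (i j : I) := conjTranspose_mul_lift_gnsTuple_mul_apply hG hRS hSR hΛ (hg i j) i j
  conv_rhs => rw [g.matrix_eq_sum_single]
  simp only [map_sum, ← hentry, mul_mul_apply_eq_dotProduct, dotProduct, Matrix.mulVec, evalM,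
    Fintype.sum_prod_type, Pi.star_apply, hξ, Matrix.conjTranspose_apply, Matrix.col_apply,
    Finset.mul_sum]
  exact Finset.sum_congr rfl fun i _ => Finset.sum_comm

end GNS

section Positivstellensatz

variable {I J : Type*} {δ : ℕ}

theorem exists_hermitian_tuple_of_localizing_posDef [Fintype I] [DecidableEq I] [Finite J]
    {Λ : Matrix I I (FreeAlg n) →ₗ[ℂ] ℂ} (hΛ : ∀ p, Λ (star p) = star (Λ p))
    {Q : Matrix J J (FreeAlg n)} (hQ : matDegLE Q 1)
    (hpos : (localizing δ Λ (Matrix.fromBlocks (1 : Matrix I I (FreeAlg n)) 0 0 Q)).PosDef) :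
    ∃ (k : ℕ) (X : Fin n → Matrix (Fin k) (Fin k) ℂ) (ξ : I × Fin k → ℂ),
      (∀ x, (X x).IsHermitian) ∧ (evalM Q X).PosSemidef ∧
        ∀ g, matDegLE g (2 * δ + 1) → star ξ ⬝ᵥ (evalM g X *ᵥ ξ) = Λ g := by
  classical
  have := Fintype.ofFinite J
  obtain ⟨k, R, S, hG, hRS, hSR⟩ := exists_conjTranspose_mul_eq_of_posDef
    (hankel_one_posDef_of_localizing_fromBlocks hpos)
  refine ⟨k, gnsTuple Λ S, fun p => R p.2 (p.1, ⟨[], δ.zero_le⟩), isHermitian_gnsTuple hΛ, ?_,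
    fun g hg => dotProduct_evalM_gnsTuple_mulVec hG hRS hSR hΛ hg fun _ => rfl⟩
  rw [evalM_gnsTuple_of_matDegLE_one hG hRS hQ]
  exact (localizing_posSemidef_of_fromBlocks hpos).conjTranspose_mul_mul_same _

theorem exists_functional_of_notMem_closure [Fintype I] [DecidableEq I] [Fintype J]
    [DecidableEq J]
    {P : Matrix J J (FreeAlg n)} (hP : P.IsHermitian) (hP0 : P.map (coeff []) = 1)
    {g : Matrix I I (FreeAlg n)} (hg : g.IsHermitian)
    (hgP : g ∉ AddSubmonoid.closure
      (Set.range fun y : J × I × Words n δ → ℂ => weightedSquare P y y)) :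
    ∃ Λ : Matrix I I (FreeAlg n) →ₗ[ℂ] ℂ,
      (∀ p, Λ (star p) = star (Λ p)) ∧ (localizing δ Λ P).PosDef ∧ Λ g < 0 := by
  have hdef (m : ℕ) (y : Fin m → J × I × Words n δ → ℂ)
      (hy : ∑ i, weightedSquare P (y i) (y i) = 0) : y = 0 := by
    have hzero := eq_zero_of_sum_conjTranspose_mul_mul_eq_zero hP0 hy
    exact funext fun i => (map_eq_zero_iff _ ofCoeffs_injective).1 (congrFun hzero i)
  obtain ⟨Λ, hΛ, hpos, hneg⟩ := exists_hermitian_functional_pos_neg (weightedSquare P)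
    (fun y => Matrix.isHermitian_conjTranspose_mul_mul _ hP) hdef hg hgP
  exact ⟨Λ, hΛ, localizing_posDef hΛ hP hpos, hneg⟩

theorem exists_eq_sum_of_forall_posSemidef [Fintype I] [Fintype J] [DecidableEq J]
    {Q : Matrix J J (FreeAlg n)} (hQ : Q.IsHermitian) (hQ0 : Q.map (coeff []) = 1)
    (hQ1 : matDegLE Q 1) {g : Matrix I I (FreeAlg n)} (hg : g.IsHermitian)
    (hgδ : matDegLE g (2 * δ + 1))
    (hpos : ∀ (k : ℕ) (X : Fin n → Matrix (Fin k) (Fin k) ℂ), (∀ x, (X x).IsHermitian) →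
      (evalM Q X).PosSemidef → (evalM g X).PosSemidef) :
    ∃ (m : ℕ) (s : Fin m → Matrix I I (FreeAlg n)) (v : Fin m → Matrix J I (FreeAlg n)),
      (∀ i, matDegLE (s i) δ) ∧ (∀ i, matDegLE (v i) δ) ∧
        g = ∑ i, (s i)ᴴ * s i + ∑ i, (v i)ᴴ * Q * v i := by
  classical
  have hP : (Matrix.fromBlocks (1 : Matrix I I (FreeAlg n)) 0 0 Q).IsHermitian :=
    Matrix.isHermitian_one.fromBlocks Matrix.conjTranspose_zero hQ
  have hP0 : (Matrix.fromBlocks (1 : Matrix I I (FreeAlg n)) 0 0 Q).map (coeff []) = 1 := by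
    rw [Matrix.fromBlocks_map, map_coeff_nil_one, hQ0, Matrix.map_zero _ (map_zero _),
      Matrix.map_zero _ (map_zero _), Matrix.fromBlocks_one]
  by_cases hgP : g ∈ AddSubmonoid.closure (Set.range fun y : (I ⊕ J) × I × Words n δ → ℂ =>
    weightedSquare (Matrix.fromBlocks (1 : Matrix I I (FreeAlg n)) 0 0 Q) y y)
  · obtain ⟨m, y, rfl⟩ := exists_fin_sum_of_mem_closure_range hgP
    refine ⟨m, fun i => (ofCoeffs (y i)).toRows₁, fun i => (ofCoeffs (y i)).toRows₂,
      fun i a b => matDegLE_ofCoeffs (y i) _ b, fun i a b => matDegLE_ofCoeffs (y i) _ b, ?_⟩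
    simp only [weightedSquare_apply, conjTranspose_mul_fromBlocks_one_mul, Finset.sum_add_distrib]
  · obtain ⟨Λ, hΛ, hloc, hneg⟩ := exists_functional_of_notMem_closure hP hP0 hg hgP
    obtain ⟨k, X, ξ, hX, hQX, hξ⟩ := exists_hermitian_tuple_of_localizing_posDef hΛ hQ1 hloc
    have hnonneg := (hpos k X hX hQX).dotProduct_mulVec_nonneg ξ
    rw [hξ g hgδ] at hnonneg
    exact (hneg.not_ge hnonneg).elim

theorem posSemidef_evalM_sum_add_sum [Fintype I] [Fintype J] {Q : Matrix J J (FreeAlg n)} {k : ℕ}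
    {X : Fin n → Matrix (Fin k) (Fin k) ℂ} (hX : ∀ x, (X x).IsHermitian)
    (hQ : (evalM Q X).PosSemidef) {ι κ : Type*} [Fintype ι] [Fintype κ]
    (s : ι → Matrix I I (FreeAlg n)) (v : κ → Matrix J I (FreeAlg n)) :
    (evalM (∑ i, (s i)ᴴ * s i + ∑ j, (v j)ᴴ * Q * v j) X).PosSemidef := by
  rw [evalM_add, evalM_sum, evalM_sum]
  refine (Matrix.posSemidef_sum _ fun i _ => ?_).add
    (Matrix.posSemidef_sum _ fun j _ => posSemidef_evalM_conjTranspose_mul_mul hX hQ (v j))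
  rw [evalM_mul, evalM_conjTranspose hX]
  exact Matrix.posSemidef_conjTranspose_mul_self _

end Positivstellensatz

end FreeSpectrahedron

open FreeSpectrahedron

/-- SDP formulation of eigenvalue optimization over a free spectrahedron:
for each `μ ∈ ℝ`, `f(X) ⪯ μ·I` on `D_L` iff `μ·I − f` has a degree-bounded
sums-of-squares certificate with weights from `L`. -/
theorem eigenvalue_optimization_sdp {n d e : ℕ}
    (f : Matrix (Fin d) (Fin d) (FreeAlg n)) (hf : IsHermPoly f)
    (A : Fin n → Matrix (Fin e) (Fin e) ℂ) (hA : ∀ j, (A j).IsHermitian) (μ : ℝ) :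
    (∀ (k : ℕ) (X : Fin n → Matrix (Fin k) (Fin k) ℂ), (∀ j, (X j).IsHermitian) →
        (monicK A X).PosSemidef →
        ((μ : ℂ) • (1 : Matrix (Fin d × Fin k) (Fin d × Fin k) ℂ) -
          evalM f X).PosSemidef) ↔
      (∃ (M N : ℕ) (s : Fin M → Matrix (Fin d) (Fin d) (FreeAlg n))
          (v : Fin N → Matrix (Fin e) (Fin d) (FreeAlg n)),
        (∀ i, matDegLE (s i) (matDeg f / 2)) ∧
        (∀ j, matDegLE (v j) (matDeg f / 2)) ∧
        (μ : ℂ) • (1 : Matrix (Fin d) (Fin d) (FreeAlg n)) - f =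
          ∑ i, adjM (s i) * s i + ∑ j, adjM (v j) * monicPoly A * v j) := by
  have heval (k : ℕ) (X : Fin n → Matrix (Fin k) (Fin k) ℂ) :
      evalM ((μ : ℂ) • 1 - f) X = (μ : ℂ) • 1 - evalM f X := by
    rw [evalM_sub, evalM_smul, evalM_one]
  simp only [← heval, ← evalM_monicPoly]
  constructor
  · intro h
    have hdeg : matDegLE ((μ : ℂ) • 1 - f) (2 * (matDeg f / 2) + 1) :=
      matDegLE_smul_one_sub (matDegLE_matDeg f) (by lia) _
    obtain ⟨m, s, v, hs, hv, hsv⟩ := exists_eq_sum_of_forall_posSemidef (isHermitian_monicPoly hA)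
      (map_coeff_nil_monicPoly A) (matDegLE_monicPoly A) (isHermitian_smul_one_sub hf μ) hdeg h
    exact ⟨m, m, s, v, hs, hv, hsv⟩
  · rintro ⟨M, N, s, v, -, -, hsv⟩ k X hX hL
    rw [hsv]
    exact posSemidef_evalM_sum_add_sum hX hL s v
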